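/- For every odd integer p ≥ 3, let x be the binary sequence of length 7p-2 whose run-length encoding starting with +1 is (p, p, 2p, p, p-1, p-1), i.e. x_i = 1 for 1 ≤ i ≤ p, x_i = -1 for p+1 ≤ i ≤ 2p, x_i = 1 for 2p+1 ≤ i ≤ 4p, x_i = -1 for 4p+1 ≤ i ≤ 5p, x_i = 1 for 5p+1 ≤ i ≤ 6p-1, and x_i = -1 for 6p ≤ i ≤ 7p-2. Then x satisfies equation (k) for all 1 ≤ k ≤ 3p, while the derived sequence z of length 7 defined by z_j = x_{p(j-1)+1} equals (1,-1,1,1,-1,1,-1) and does not satisfy equation (3), even though 3 ≤ 3p/p. Hence for every odd p ≥ 3 there is a counterexample to Theorem 1(iv) of Turyn and Storer with this value of p. -/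

import Mathlib

/-- A binary sequence `x` (1-indexed) satisfies equation (k) if
`∑_{i=1}^{k} (-1)^{i+1} x_i x_{2k+2-i} = (1+(-1)^{k+1})/2`. -/
def SatisfiesEqn (x : ℕ → ℤ) (k : ℕ) : Prop :=
  ∑ i ∈ Finset.Icc 1 k, (-1 : ℤ) ^ (i + 1) * x i * x (2 * k + 2 - i)
    = (1 + (-1 : ℤ) ^ (k + 1)) / 2

/-- The binary sequence z = (1,-1,1,1,-1,1,-1) of length 7. -/
def z7 : ℕ → ℤ := fun j =>
  if j = 1 then 1
  else if j = 2 then -1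
  else if j = 3 then 1
  else if j = 4 then 1
  else if j = 5 then -1
  else if j = 6 then 1
  else -1

/-
For `x = (x₁, x₂, …)` put `F(X) = ∑ xₙ₊₁ Xⁿ`. When `x_{k+1} = ±1`, folding the coefficient of
`X^(2k)` in `F(X) F(-X)` at its middle term shows that equation (k) says that this coefficient
is `1`. The constant sequence `1` has generating series `E = (1 - X)⁻¹`, and
`E(X) E(-X) = (1 - X²)⁻¹` has all even coefficients equal to `1`. Up to its length, a sequence
with runs `(p, p, 2p, p, r, p - 1)` has `F = A E`, where, for `u = X^p` and `v = X^(5p+r)`,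
`A = 1 - 2u + 2u² - 2u⁴ + 2u⁵ - 2v`. For `p` odd and `r` even, `X ↦ -X` negates `u` and `v`, and
`A(X) A(-X) = 1 + 4u⁸ - 4u¹⁰ - 8uv + 8u⁵v - 4v²` is `1` modulo `X^(6p+r)`. Hence all equations
that fit into the length of `x` hold, whereas equation (3) for the derived sequence, whose terms
do not depend on `r` for `2 ≤ r ≤ p`, fails by inspection. The theorem is the case `r = p - 1`.
-/

open PowerSeries

theorem sum_range_two_mul_add_one_of_symm {M : Type*} [AddCommMonoid M] {f : ℕ → M} {k : ℕ}
    (hf : ∀ i < k, f (2 * k - i) = f i) :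
    ∑ i ∈ Finset.range (2 * k + 1), f i = 2 • ∑ i ∈ Finset.range k, f i + f k := by
  have upper_half : ∑ i ∈ Finset.range k, f (k + 1 + i) = ∑ i ∈ Finset.range k, f i := by
    rw [← Finset.sum_range_reflect]
    refine Finset.sum_congr rfl fun i hi => ?_
    have hik : i < k := Finset.mem_range.mp hi
    rw [← hf i hik]
    congr 1
    omega
  rw [show 2 * k + 1 = k + 1 + k by omega, Finset.sum_range_add, Finset.sum_range_succ,
    upper_half, two_nsmul]
  abel

section EvalNegHom

variable {R : Type*} [CommRing R]

theorem coeff_evalNegHom (n : ℕ) (F : R⟦X⟧) : coeff n (evalNegHom F) = (-1) ^ n * coeff n F :=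
  coeff_rescale F (-1) n

theorem coeff_two_mul_mul_evalNegHom (F : R⟦X⟧) (k : ℕ) :
    coeff (2 * k) (F * evalNegHom F) =
      2 * ∑ i ∈ Finset.range k, (-1) ^ i * coeff i F * coeff (2 * k - i) F
        + (-1) ^ k * coeff k F ^ 2 := by
  have symm : ∀ i < k, (-1) ^ (2 * k - i) * coeff (2 * k - i) F * coeff (2 * k - (2 * k - i)) F
      = (-1) ^ i * coeff i F * coeff (2 * k - i) F := by
    intro i hi
    have same_parity : Even (2 * k - i) ↔ Even i := by grind
    rw [neg_one_pow_congr same_parity, Nat.sub_sub_self (by omega)]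
    ring
  rw [mul_comm F, coeff_mul, Finset.Nat.sum_antidiagonal_eq_sum_range_succ_mk]
  simp only [coeff_evalNegHom]
  rw [sum_range_two_mul_add_one_of_symm symm, nsmul_eq_mul, Nat.cast_ofNat,
    show 2 * k - k = k by omega, mul_assoc, ← sq]

theorem coeff_two_mul_mk_one_mul_evalNegHom (k : ℕ) :
    coeff (2 * k) (mk 1 * evalNegHom (mk 1) : R⟦X⟧) = 1 := by
  rw [mul_comm (mk 1), coeff_mul, Finset.Nat.sum_antidiagonal_eq_sum_range_succ_mk]
  simp [coeff_evalNegHom, neg_one_geom_sum]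

theorem X_pow_dvd_evalNegHom {n : ℕ} {F : R⟦X⟧} (hF : X ^ n ∣ F) : X ^ n ∣ evalNegHom F := by
  rw [X_pow_dvd_iff] at hF ⊢
  intro m hm
  rw [coeff_evalNegHom, hF m hm, mul_zero]

theorem X_pow_dvd_mul_evalNegHom_sub {n : ℕ} {F A E : R⟦X⟧} (hF : X ^ n ∣ F - A * E)
    (hA : X ^ n ∣ A * evalNegHom A - 1) :
    X ^ n ∣ F * evalNegHom F - E * evalNegHom E := by
  have hF' : X ^ n ∣ evalNegHom F - evalNegHom A * evalNegHom E := by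
    simpa only [map_sub, map_mul] using X_pow_dvd_evalNegHom hF
  have hAE := (dvd_mul_sub_mul hF hF').add (hA.mul_right (E * evalNegHom E))
  convert! hAE using 1
  ring

theorem coeff_two_mul_mul_evalNegHom_eq_one {n k : ℕ} (hk : 2 * k < n) {F A : R⟦X⟧}
    (hF : X ^ n ∣ F - A * mk 1) (hA : X ^ n ∣ A * evalNegHom A - 1) :
    coeff (2 * k) (F * evalNegHom F) = 1 := by
  have hE := X_pow_dvd_iff.mp (X_pow_dvd_mul_evalNegHom_sub hF hA) (2 * k) hk
  rwa [map_sub, coeff_two_mul_mk_one_mul_evalNegHom, sub_eq_zero] at hE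

end EvalNegHom

theorem satisfiesEqn_iff_sum_range {x : ℕ → ℤ} {k : ℕ} :
    SatisfiesEqn x k ↔
      2 * ∑ i ∈ Finset.range k, (-1) ^ i * x (i + 1) * x (2 * k - i + 1) + (-1) ^ k = 1 := by
  have shift : ∑ i ∈ Finset.Icc 1 k, (-1 : ℤ) ^ (i + 1) * x i * x (2 * k + 2 - i)
      = ∑ i ∈ Finset.range k, (-1) ^ i * x (i + 1) * x (2 * k - i + 1) := by
    rw [← Finset.Ico_add_one_right_eq_Icc, Finset.sum_Ico_eq_sum_range]
    refine Finset.sum_congr rfl fun i hi => ?_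
    have hik : i < k := Finset.mem_range.mp hi
    rw [show 2 * k + 2 - (1 + i) = 2 * k - i + 1 by omega, add_comm 1 i]
    ring
  rw [SatisfiesEqn, shift, pow_succ]
  rcases neg_one_pow_eq_or ℤ k with hsign | hsign <;> rw [hsign] <;> omega

/-- The generating series `∑ xₙ₊₁ Xⁿ` of a 1-indexed sequence, whose value at the junk index `0`
is ignored. -/
noncomputable def generatingSeries (x : ℕ → ℤ) : ℤ⟦X⟧ :=
  mk fun n => x (n + 1)

theorem coeff_generatingSeries (x : ℕ → ℤ) (n : ℕ) : coeff n (generatingSeries x) = x (n + 1) :=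
  coeff_mk n _

theorem satisfiesEqn_iff_coeff_generatingSeries {x : ℕ → ℤ} {k : ℕ} (hx : x (k + 1) ^ 2 = 1) :
    SatisfiesEqn x k ↔
      coeff (2 * k) (generatingSeries x * evalNegHom (generatingSeries x)) = 1 := by
  simp only [satisfiesEqn_iff_sum_range, coeff_two_mul_mul_evalNegHom, coeff_generatingSeries, hx,
    mul_one]

theorem satisfiesEqn_congr {x y : ℕ → ℤ} {k : ℕ}
    (h : ∀ i, 1 ≤ i → i ≤ 2 * k + 1 → x i = y i) : SatisfiesEqn x k ↔ SatisfiesEqn y k := by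
  unfold SatisfiesEqn
  rw [Finset.sum_congr rfl fun i hi => ?_]
  obtain ⟨hi₁, hik⟩ := Finset.mem_Icc.mp hi
  rw [h i hi₁ (by omega), h (2 * k + 2 - i) (by omega) (by omega)]

theorem not_satisfiesEqn_z7_three : ¬ SatisfiesEqn z7 3 := by
  unfold SatisfiesEqn
  decide

/-- The 1-indexed sequence `x` starts with the run-length encoding `(p, p, 2p, p, r, p - 1)` of
total length `6p + r - 1`, the first run consisting of `+1`s. Later entries are arbitrary. -/
structure HasRuns (p r : ℕ) (x : ℕ → ℤ) : Prop where
  run₁ : ∀ i, 1 ≤ i → i ≤ p → x i = 1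
  run₂ : ∀ i, p + 1 ≤ i → i ≤ 2 * p → x i = -1
  run₃ : ∀ i, 2 * p + 1 ≤ i → i ≤ 4 * p → x i = 1
  run₄ : ∀ i, 4 * p + 1 ≤ i → i ≤ 5 * p → x i = -1
  run₅ : ∀ i, 5 * p + 1 ≤ i → i ≤ 5 * p + r → x i = 1
  run₆ : ∀ i, 5 * p + r + 1 ≤ i → i ≤ 6 * p + r - 1 → x i = -1

/-- The series recording the sign changes of a sequence with runs `(p, p, 2p, p, r, p - 1)`: it
agrees with `(1 - X) F` below degree `6p + r - 1`, where `F` is the generating series of the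
sequence. Each jump sits at the 0-based index of the first entry of a new run. -/
noncomputable def jumpSeries (p r : ℕ) : ℤ⟦X⟧ :=
  1 - 2 * X ^ p + 2 * X ^ (2 * p) - 2 * X ^ (4 * p) + 2 * X ^ (5 * p) - 2 * X ^ (5 * p + r)

theorem coeff_two_mul_X_pow_mul_mk_one (a n : ℕ) :
    coeff n (2 * X ^ a * mk 1 : ℤ⟦X⟧) = if a ≤ n then 2 else 0 := by
  rw [mul_assoc, two_mul, map_add, coeff_X_pow_mul']
  split_ifs <;> simp

theorem coeff_jumpSeries_mul_mk_one (p r n : ℕ) :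
    coeff n (jumpSeries p r * mk 1) =
      1 - (if p ≤ n then 2 else 0) + (if 2 * p ≤ n then 2 else 0) - (if 4 * p ≤ n then 2 else 0)
        + (if 5 * p ≤ n then 2 else 0) - (if 5 * p + r ≤ n then 2 else 0) := by
  simp only [jumpSeries, sub_mul, add_mul, one_mul, map_sub, map_add,
    coeff_two_mul_X_pow_mul_mk_one, coeff_mk, Pi.one_apply]

theorem evalNegHom_jumpSeries {p r : ℕ} (hp : Odd p) (hr : Even r) :
    evalNegHom (jumpSeries p r) =
      1 + 2 * X ^ p + 2 * X ^ (2 * p) - 2 * X ^ (4 * p) - 2 * X ^ (5 * p)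
        + 2 * X ^ (5 * p + r) := by
  have h2p : Even (2 * p) := even_two_mul p
  have h4p : Even (4 * p) := by grind
  have h5p : Odd (5 * p) := by grind
  simp only [jumpSeries, map_sub, map_add, map_mul, map_pow, map_one, map_ofNat, evalNegHom_X,
    hp.neg_pow, h2p.neg_pow, h4p.neg_pow, h5p.neg_pow, (h5p.add_even hr).neg_pow]
  ring

theorem X_pow_dvd_jumpSeries_mul_evalNegHom_sub_one {p r : ℕ} (hp : Odd p) (hr : Even r)
    (hrp : r ≤ 2 * p) :
    X ^ (6 * p + r) ∣ jumpSeries p r * evalNegHom (jumpSeries p r) - 1 := by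
  set u : ℤ⟦X⟧ := X ^ p with hu
  set v : ℤ⟦X⟧ := X ^ (5 * p + r) with hv
  have expand : jumpSeries p r * evalNegHom (jumpSeries p r) - 1
      = u ^ 8 * (4 - 4 * u ^ 2) + u * v * (8 * u ^ 4 - 8) - 4 * v ^ 2 := by
    rw [evalNegHom_jumpSeries hp hr, jumpSeries, hu, hv]
    ring
  have hu8 : X ^ (6 * p + r) ∣ u ^ 8 := by
    rw [hu, ← pow_mul]
    exact pow_dvd_pow X (by omega)
  have huv : X ^ (6 * p + r) ∣ u * v := by
    rw [hu, hv, ← pow_add]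
    exact pow_dvd_pow X (by omega)
  have hv2 : X ^ (6 * p + r) ∣ v ^ 2 := by
    rw [hv, ← pow_mul]
    exact pow_dvd_pow X (by omega)
  rw [expand]
  exact ((hu8.mul_right _).add (huv.mul_right _)).sub (hv2.mul_left _)

namespace HasRuns

variable {p r : ℕ} {x : ℕ → ℤ}

theorem eq_coeff_jumpSeries_mul_mk_one (hx : HasRuns p r x) {n : ℕ} (hn : n < 6 * p + r - 1) :
    x (n + 1) = coeff n (jumpSeries p r * PowerSeries.mk 1) := by
  rw [coeff_jumpSeries_mul_mk_one]
  rcases lt_or_ge n p with h₁ | h₁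
  · rw [hx.run₁ _ (by omega) (by omega)]
    split_ifs <;> omega
  rcases lt_or_ge n (2 * p) with h₂ | h₂
  · rw [hx.run₂ _ (by omega) (by omega)]
    split_ifs <;> omega
  rcases lt_or_ge n (4 * p) with h₃ | h₃
  · rw [hx.run₃ _ (by omega) (by omega)]
    split_ifs <;> omega
  rcases lt_or_ge n (5 * p) with h₄ | h₄
  · rw [hx.run₄ _ (by omega) (by omega)]
    split_ifs <;> omega
  rcases lt_or_ge n (5 * p + r) with h₅ | h₅
  · rw [hx.run₅ _ (by omega) (by omega)]
    split_ifs <;> omega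
  · rw [hx.run₆ _ (by omega) (by omega)]
    split_ifs <;> omega

theorem sq_eq_one (hx : HasRuns p r x) {i : ℕ} (hi : 1 ≤ i) (hi' : i ≤ 6 * p + r - 1) :
    x i ^ 2 = 1 := by
  obtain ⟨run₁, run₂, run₃, run₄, run₅, run₆⟩ := hx
  grind

theorem X_pow_dvd_generatingSeries_sub (hx : HasRuns p r x) :
    X ^ (6 * p + r - 1) ∣ generatingSeries x - jumpSeries p r * PowerSeries.mk 1 := by
  rw [X_pow_dvd_iff]
  intro n hn
  rw [map_sub, coeff_generatingSeries, hx.eq_coeff_jumpSeries_mul_mk_one hn, sub_self]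

theorem satisfiesEqn (hx : HasRuns p r x) (hp : Odd p) (hr : Even r) (hrp : r ≤ 2 * p) {k : ℕ}
    (hk : 2 * k + 1 ≤ 6 * p + r - 1) : SatisfiesEqn x k :=
  (satisfiesEqn_iff_coeff_generatingSeries (hx.sq_eq_one (by omega) (by omega))).mpr <|
    coeff_two_mul_mul_evalNegHom_eq_one hk hx.X_pow_dvd_generatingSeries_sub <|
      (pow_dvd_pow _ (Nat.sub_le _ 1)).trans
        (X_pow_dvd_jumpSeries_mul_evalNegHom_sub_one hp hr hrp)

theorem derived_eq_z7 (hx : HasRuns p r x) (hr : 2 ≤ r) (hrp : r ≤ p) {j : ℕ} (hj : 1 ≤ j)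
    (hj' : j ≤ 7) : x (p * (j - 1) + 1) = z7 j := by
  interval_cases j
  · exact hx.run₁ _ (by omega) (by omega)
  · exact hx.run₂ _ (by omega) (by omega)
  · exact hx.run₃ _ (by omega) (by omega)
  · exact hx.run₃ _ (by omega) (by omega)
  · exact hx.run₄ _ (by omega) (by omega)
  · exact hx.run₅ _ (by omega) (by omega)
  · exact hx.run₆ _ (by omega) (by omega)

end HasRuns

theorem counterexample_family_turyn_storer_general {p r : ℕ} (hp : Odd p) (hr : Even r)
    (hr₂ : 2 ≤ r) (hrp : r ≤ p) {x : ℕ → ℤ} (hx : HasRuns p r x) :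
    (∀ k, 2 * k + 1 ≤ 6 * p + r - 1 → SatisfiesEqn x k) ∧
    (∀ j, 1 ≤ j → j ≤ 7 → x (p * (j - 1) + 1) = z7 j) ∧
    ¬ SatisfiesEqn (fun j => x (p * (j - 1) + 1)) 3 := by
  have hz : ∀ j, 1 ≤ j → j ≤ 7 → x (p * (j - 1) + 1) = z7 j :=
    fun j => hx.derived_eq_z7 hr₂ hrp
  refine ⟨fun k => hx.satisfiesEqn hp hr (by omega), hz, ?_⟩
  rw [satisfiesEqn_congr hz]
  exact not_satisfiesEqn_z7_three

/-- For every odd `p ≥ 3`, the binary sequence of length `7p-2` with run-length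
encoding `(p, p, 2p, p, p-1, p-1)` starting with +1 is a counterexample to
Theorem 1(iv) of Turyn and Storer with `t = 3p`. -/
theorem counterexample_family_turyn_storer
    (p : ℕ) (hodd : Odd p) (hp : 3 ≤ p) (x : ℕ → ℤ)
    (h1 : ∀ i : ℕ, 1 ≤ i → i ≤ p → x i = 1)
    (h2 : ∀ i : ℕ, p + 1 ≤ i → i ≤ 2 * p → x i = -1)
    (h3 : ∀ i : ℕ, 2 * p + 1 ≤ i → i ≤ 4 * p → x i = 1)
    (h4 : ∀ i : ℕ, 4 * p + 1 ≤ i → i ≤ 5 * p → x i = -1)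
    (h5 : ∀ i : ℕ, 5 * p + 1 ≤ i → i ≤ 6 * p - 1 → x i = 1)
    (h6 : ∀ i : ℕ, 6 * p ≤ i → i ≤ 7 * p - 2 → x i = -1) :
    -- x satisfies equation (k) for all 1 ≤ k ≤ 3p
    (∀ k : ℕ, 1 ≤ k → k ≤ 3 * p → SatisfiesEqn x k) ∧
    -- the derived sequence z_j = x_{p(j-1)+1} equals (1,-1,1,1,-1,1,-1) ...
    (∀ j : ℕ, 1 ≤ j → j ≤ 7 → x (p * (j - 1) + 1) = z7 j) ∧
    -- ... and does not satisfy equation (3), even though 3 ≤ 3p/p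
    ¬ SatisfiesEqn (fun j => x (p * (j - 1) + 1)) 3 ∧
    (3 : ℚ) ≤ (3 * p : ℚ) / (p : ℚ) := by
  have hx : HasRuns p (p - 1) x :=
    ⟨h1, h2, h3, h4, fun i hi hi' => h5 i hi (by omega),
      fun i hi hi' => h6 i (by omega) (by omega)⟩
  obtain ⟨heqn, hz, hz3⟩ := counterexample_family_turyn_storer_general hodd
    (hodd.tsub_odd odd_one) (by omega) (by omega) hx
  have hratio : (3 : ℚ) ≤ (3 * p : ℚ) / (p : ℚ) := by field_simp; rfl
  exact ⟨fun k _ hk => heqn k (by omega), hz, hz3, hratio⟩
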